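/- (Lemma 1, '◇' identity.) Let W be a binary-input discrete memoryless channel with finite output alphabet 𝒴, let n = 2^m ≥ 4, and let 1 ≤ i ≤ n/2 − 1. Then for all y ∈ 𝒴ⁿ and all u₁,…,u_{2i+1} ∈ 𝔽₂: V_{2i}^{(n)}(y, (u₁,…,u_{2i−1}) | u_{2i}, u_{2i+1}) = (1/4)·∑_{d ∈ 𝔽₂} V_i^{(n/2)}(y_odd, (ũ₁, ũ₃, …, ũ_{2i−3}) | u_{2i−1}+u_{2i}, u_{2i+1}+d) · V_i^{(n/2)}(y_even, (ũ₂, ũ₄, …, ũ_{2i−2}) | u_{2i}, d). This is the identity V_{2i}^{(n)} = (V_i^{(n/2)})^◇. -/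

import Mathlib

/-!
The event defining the conditional probability `V_{2i}^{(n)}` fixes `u₁, …, u_{2i+1}`, and every
pair of adjacent message bits has probability `1/4`, so an adjacent-bits channel of size `m` is
`4 · 2^{-m}` times the likelihood sum `likeSum` over all messages extending the given prefix
(`adjChannel_eq`). The linear bijection `u ↦ (ũ_odd, ũ_even)` (`splitEquiv`) turns the codeword
`u (A ⊗ G₂)` into the two interleaved codewords `ũ_odd A` and `ũ_even A` (`vecMul_even`,
`vecMul_odd`), so the likelihood factors. The only constraint coupling the halves is
`ũ_{2i+1} + ũ_{2i+2} = u_{2i+1}`; summing over the value `d` of `ũ_{2i+2}` decouples it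
(`likeSum_interKron`).
-/

open scoped Classical

/-- Probability of an event `E` under a pmf `P` on a finite space. -/
noncomputable def prob {Ω : Type*} [Fintype Ω] (P : Ω → ℝ) (E : Ω → Prop) : ℝ :=
  ∑ ω : Ω, if E ω then P ω else 0

/-- The polar-coding model `μ_G`: the joint pmf on message/output pairs, where the message
`u` is uniform on `𝔽₂ⁿ`, the codeword is `uG`, and each coordinate is sent through the
binary-input channel `W` (here `W x y` denotes the transition probability `W(y|x)`). -/
noncomputable def polarPMF {𝒴 : Type*} [Fintype 𝒴] {n : ℕ}
    (W : ZMod 2 → 𝒴 → ℝ) (G : Matrix (Fin n) (Fin n) (ZMod 2)) :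
    (Fin n → ZMod 2) × (Fin n → 𝒴) → ℝ :=
  fun p => (1 / 2 : ℝ) ^ n * ∏ j, W (Matrix.vecMul p.1 G j) (p.2 j)

/-- The adjacent-bits-channel `V_i^M` of the model `μ_M` (0-based index `i`):
`V_i^M(y, (u_0, …, u_{i-1}) | a, b) = P(Y = y, U_0 = u_0, …, U_{i-1} = u_{i-1} | U_i = a, U_{i+1} = b)`.
Only the values `upre j` for `j < i` are relevant. -/
noncomputable def adjChannel {𝒴 : Type*} [Fintype 𝒴] {m : ℕ}
    (W : ZMod 2 → 𝒴 → ℝ) (M : Matrix (Fin m) (Fin m) (ZMod 2))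
    (i : ℕ) (y : Fin m → 𝒴) (upre : ℕ → ZMod 2) (a b : ZMod 2) : ℝ :=
  prob (polarPMF W M)
      (fun p => p.2 = y ∧ ∀ j : Fin m,
        (j.val < i → p.1 j = upre j.val) ∧ (j.val = i → p.1 j = a) ∧
          (j.val = i + 1 → p.1 j = b)) /
    prob (polarPMF W M)
      (fun p => ∀ j : Fin m, (j.val = i → p.1 j = a) ∧ (j.val = i + 1 → p.1 j = b))

/-- The 2×2 Arıkan kernel `G₂ = [[1,0],[1,1]]` over `𝔽₂`. -/
def G2 : Matrix (Fin 2) (Fin 2) (ZMod 2) := !![1, 0; 1, 1]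

/-- The Kronecker product `A ⊗ G₂` under the interleaved index identification
`(j, k) ↦ 2j + k` (0-based): `(A ⊗ G₂)(r, c) = A(r/2, c/2) · G₂(r%2, c%2)`. -/
def interKron {m : ℕ} (A : Matrix (Fin m) (Fin m) (ZMod 2)) :
    Matrix (Fin (2 * m)) (Fin (2 * m)) (ZMod 2) :=
  fun r c =>
    A ⟨r.val / 2, by have := r.isLt; omega⟩ ⟨c.val / 2, by have := c.isLt; omega⟩ *
      G2 ⟨r.val % 2, by omega⟩ ⟨c.val % 2, by omega⟩

/-- The polar matrix `G_{2^m}^polar = G₂^{⊗ m}` (via `G_{2n} = G_n ⊗ G₂`,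
interleaved identification). -/
def Gpolar : (m : ℕ) → Matrix (Fin (2 ^ m)) (Fin (2 ^ m)) (ZMod 2)
  | 0 => 1
  | m + 1 => Matrix.reindex (finCongr (by ring)) (finCongr (by ring)) (interKron (Gpolar m))

/-- The unnormalised likelihood of the output `y`, summed over all messages `v` with prefix `upre`
below index `i` and `v i = a`, `v (i + 1) = b`. -/
noncomputable def likeSum {𝒴 : Type*} {m : ℕ}
    (W : ZMod 2 → 𝒴 → ℝ) (M : Matrix (Fin m) (Fin m) (ZMod 2))
    (i : ℕ) (y : Fin m → 𝒴) (upre : ℕ → ZMod 2) (a b : ZMod 2) : ℝ :=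
  ∑ v : Fin m → ZMod 2, if (∀ j : Fin m,
        (j.val < i → v j = upre j.val) ∧ (j.val = i → v j = a) ∧
          (j.val = i + 1 → v j = b)) then ∏ j, W (Matrix.vecMul v M j) (y j) else 0

lemma sum_prod_channel {𝒴 : Type*} [Fintype 𝒴] {m : ℕ}
    (W : ZMod 2 → 𝒴 → ℝ) (hW1 : ∀ x, ∑ y, W x y = 1) (x : Fin m → ZMod 2) :
    ∑ y : Fin m → 𝒴, ∏ j, W (x j) (y j) = 1 := by
  rw [← Fintype.prod_sum]
  simp [hW1]

/-- Two adjacent bits of the uniform message take any prescribed values with probability `1/4`. -/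
lemma prob_adjacent {𝒴 : Type*} [Fintype 𝒴] {m : ℕ}
    (W : ZMod 2 → 𝒴 → ℝ) (hW1 : ∀ x, ∑ y, W x y = 1)
    (M : Matrix (Fin m) (Fin m) (ZMod 2)) (i : ℕ) (hi : i + 1 < m) (a b : ZMod 2) :
    prob (polarPMF W M)
      (fun p => ∀ j : Fin m, (j.val = i → p.1 j = a) ∧ (j.val = i + 1 → p.1 j = b)) = 1 / 4 := by
  unfold prob polarPMF
  rw [Fintype.sum_prod_type]
  have h1 : ∀ v : Fin m → ZMod 2,
      (∑ y : Fin m → 𝒴,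
        if (∀ j : Fin m, (j.val = i → v j = a) ∧ (j.val = i + 1 → v j = b)) then
          (1 / 2 : ℝ) ^ m * ∏ j, W (Matrix.vecMul v M j) (y j) else 0) =
      ∏ j : Fin m, if ((j.val = i → v j = a) ∧ (j.val = i + 1 → v j = b)) then
        (1 / 2 : ℝ) else 0 := by
    intro v
    by_cases h : ∀ j : Fin m, (j.val = i → v j = a) ∧ (j.val = i + 1 → v j = b)
    · rw [Finset.prod_congr rfl (fun j _ => if_pos (h j))]
      simp only [if_pos h]
      rw [← Finset.mul_sum, sum_prod_channel W hW1]
      simp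
    · simp only [if_neg h, Finset.sum_const_zero]
      push Not at h
      obtain ⟨j, hj⟩ := h
      refine (Finset.prod_eq_zero (Finset.mem_univ j) (if_neg ?_)).symm
      intro h'
      exact (hj h'.1).2 (h'.2 (hj h'.1).1)
  refine Eq.trans (Finset.sum_congr rfl fun v _ => Eq.trans (by congr!) (h1 v)) ?_
  rw [← Fintype.prod_sum (fun (j : Fin m) (x : ZMod 2) =>
    if ((j.val = i → x = a) ∧ (j.val = i + 1 → x = b)) then (1 / 2 : ℝ) else 0)]
  have hne : (⟨i, by omega⟩ : Fin m) ≠ ⟨i + 1, hi⟩ := by simp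
  rw [Finset.prod_eq_mul (⟨i, by omega⟩ : Fin m) ⟨i + 1, hi⟩ hne]
  · norm_num
  · rintro ⟨c, hc⟩ - ⟨h1, h2⟩
    have h1' : c ≠ i := fun h => h1 (by simp [h])
    have h2' : c ≠ i + 1 := fun h => h2 (by simp [h])
    simp [h1', h2']
  · simp
  · simp

lemma adjChannel_eq {𝒴 : Type*} [Fintype 𝒴] {m : ℕ}
    (W : ZMod 2 → 𝒴 → ℝ) (hW1 : ∀ x, ∑ y, W x y = 1)
    (M : Matrix (Fin m) (Fin m) (ZMod 2)) (i : ℕ) (hi : i + 1 < m)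
    (y : Fin m → 𝒴) (upre : ℕ → ZMod 2) (a b : ZMod 2) :
    adjChannel W M i y upre a b = 4 * (1 / 2 : ℝ) ^ m * likeSum W M i y upre a b := by
  unfold adjChannel
  rw [prob_adjacent W hW1 M i hi]
  have : prob (polarPMF W M)
      (fun p => p.2 = y ∧ ∀ j : Fin m,
        (j.val < i → p.1 j = upre j.val) ∧ (j.val = i → p.1 j = a) ∧
          (j.val = i + 1 → p.1 j = b)) = (1 / 2 : ℝ) ^ m * likeSum W M i y upre a b := by
    unfold prob polarPMF likeSum
    rw [Fintype.sum_prod_type, Finset.mul_sum]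
    refine Finset.sum_congr rfl fun v _ => ?_
    simp only [ite_and]
    rw [Finset.sum_ite_eq' Finset.univ y]
    simp
  rw [this]
  ring

/-- Products over `Fin (2 * m)` grouped into consecutive pairs. -/
lemma prod_pairs {R : Type*} [CommMonoid R] {m : ℕ} (f : Fin (2 * m) → R) :
    ∏ r, f r = ∏ j : Fin m, f ⟨2 * j.val, by omega⟩ * f ⟨2 * j.val + 1, by omega⟩ := by
  rw [← (finProdFinEquiv.trans (finCongr (mul_comm m 2))).prod_comp, Fintype.prod_prod_type]
  refine Finset.prod_congr rfl fun j _ => ?_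
  rw [Fin.prod_univ_two]
  congr 2 <;> ext <;> simp [finProdFinEquiv, add_comm]

lemma sum_pairs {R : Type*} [AddCommMonoid R] {m : ℕ} (f : Fin (2 * m) → R) :
    ∑ r, f r = ∑ j : Fin m, (f ⟨2 * j.val, by omega⟩ + f ⟨2 * j.val + 1, by omega⟩) :=
  prod_pairs (R := Multiplicative R) f

/-- The bijection `u ↦ (ũ_odd, ũ_even)`; in 0-based indexing its components are
`u (2 j) + u (2 j + 1)` and `u (2 j + 1)`. -/
def splitEquiv (m : ℕ) :
    (Fin (2 * m) → ZMod 2) ≃ (Fin m → ZMod 2) × (Fin m → ZMod 2) where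
  toFun v := (fun j => v ⟨2 * j.val, by omega⟩ + v ⟨2 * j.val + 1, by omega⟩,
    fun j => v ⟨2 * j.val + 1, by omega⟩)
  invFun p := fun r => if r.val % 2 = 0
    then p.1 ⟨r.val / 2, by omega⟩ + p.2 ⟨r.val / 2, by omega⟩ else p.2 ⟨r.val / 2, by omega⟩
  left_inv v := by
    ext ⟨r, hr⟩
    rcases Nat.even_or_odd' r with ⟨c, rfl | rfl⟩
    · simp [add_assoc, CharTwo.add_self_eq_zero]
    · have : (2 * c + 1) / 2 = c := by omega
      simp [this, Nat.add_mod]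
  right_inv p := by
    have h (c : ℕ) : (2 * c + 1) / 2 = c := by omega
    ext j
    · simp [h, Nat.add_mod, add_assoc, CharTwo.add_self_eq_zero]
    · simp [h, Nat.add_mod]

lemma vecMul_even {m : ℕ} (A : Matrix (Fin m) (Fin m) (ZMod 2)) (v : Fin (2 * m) → ZMod 2)
    (j : Fin m) : Matrix.vecMul v (interKron A) ⟨2 * j.val, by omega⟩ =
      Matrix.vecMul (splitEquiv m v).1 A j := by
  have h (c : ℕ) : (2 * c + 1) / 2 = c := by omega
  simp only [Matrix.vecMul, dotProduct]
  rw [sum_pairs]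
  refine Finset.sum_congr rfl fun l _ => ?_
  simp [interKron, G2, splitEquiv, h, Nat.add_mod]
  ring

lemma vecMul_odd {m : ℕ} (A : Matrix (Fin m) (Fin m) (ZMod 2)) (v : Fin (2 * m) → ZMod 2)
    (j : Fin m) : Matrix.vecMul v (interKron A) ⟨2 * j.val + 1, by omega⟩ =
      Matrix.vecMul (splitEquiv m v).2 A j := by
  have h (c : ℕ) : (2 * c + 1) / 2 = c := by omega
  simp only [Matrix.vecMul, dotProduct]
  rw [sum_pairs]
  refine Finset.sum_congr rfl fun l _ => ?_
  simp [interKron, G2, splitEquiv, h, Nat.add_mod]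

/-- The prefix constraint on `v` translated to its two halves. The split value `d` is the second
half's entry at index `i + 1`. -/
lemma prefix_iff {m : ℕ} (i : ℕ) (hi : i + 1 < m) (u : ℕ → ZMod 2) (v : Fin (2 * m) → ZMod 2)
    (d : ZMod 2) :
    ((∀ j : Fin m, (j.val < i → (splitEquiv m v).1 j = u (2 * j.val) + u (2 * j.val + 1)) ∧
        (j.val = i → (splitEquiv m v).1 j = u (2 * i) + u (2 * i + 1)) ∧
        (j.val = i + 1 → (splitEquiv m v).1 j = u (2 * i + 2) + d)) ∧
      (∀ j : Fin m, (j.val < i → (splitEquiv m v).2 j = u (2 * j.val + 1)) ∧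
        (j.val = i → (splitEquiv m v).2 j = u (2 * i + 1)) ∧
        (j.val = i + 1 → (splitEquiv m v).2 j = d))) ↔
    ((∀ j : Fin (2 * m), (j.val < 2 * i + 1 → v j = u j.val) ∧
        (j.val = 2 * i + 1 → v j = u (2 * i + 1)) ∧
        (j.val = 2 * i + 1 + 1 → v j = u (2 * i + 2))) ∧
      v ⟨2 * (i + 1) + 1, by omega⟩ = d) := by
  simp only [splitEquiv, Equiv.coe_fn_mk]
  constructor
  · rintro ⟨h1, h2⟩
    -- The pairs at positions up to `i` determine all bits of index at most `2 * i + 1`.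
    have key : ∀ c (hc : c ≤ i), v ⟨2 * c, by omega⟩ = u (2 * c) ∧
        v ⟨2 * c + 1, by omega⟩ = u (2 * c + 1) := by
      intro c hc
      have e1 := h1 ⟨c, by omega⟩
      have e2 := h2 ⟨c, by omega⟩
      rcases hc.lt_or_eq with hc | rfl
      · have e2' := e2.1 hc
        have e1' := e1.1 hc
        simp only at e1' e2'
        rw [e2'] at e1'
        exact ⟨add_right_cancel e1', e2'⟩
      · have e2' := e2.2.1 rfl
        have e1' := e1.2.1 rfl
        simp only at e1' e2'
        rw [e2'] at e1'
        exact ⟨add_right_cancel e1', e2'⟩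
    have e1 := (h1 ⟨i + 1, hi⟩).2.2 rfl
    have e2 := (h2 ⟨i + 1, hi⟩).2.2 rfl
    simp only at e1 e2
    rw [e2] at e1
    have e3 := add_right_cancel e1
    refine ⟨?_, e2⟩
    rintro ⟨r, hr⟩
    refine ⟨fun h => ?_, fun h => ?_, fun h => ?_⟩
    · simp only at h ⊢
      rcases Nat.even_or_odd' r with ⟨c, rfl | rfl⟩
      · exact (key c (by omega)).1
      · exact (key c (by omega)).2
    · simp only at h
      subst h
      exact (key i le_rfl).2
    · simp only at h
      subst h
      exact e3
  · rintro ⟨h, hd⟩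
    have key : ∀ c (hc : c ≤ 2 * i + 1), v ⟨c, by omega⟩ = u c := by
      intro c hc
      rcases hc.lt_or_eq with hc | rfl
      · exact (h ⟨c, by omega⟩).1 hc
      · exact (h ⟨_, by omega⟩).2.1 rfl
    have e3 : v ⟨2 * (i + 1), by omega⟩ = u (2 * i + 2) := (h ⟨_, by omega⟩).2.2 rfl
    constructor
    · rintro ⟨c, hc⟩
      refine ⟨fun h => ?_, fun h => ?_, fun h => ?_⟩ <;> simp only at h ⊢
      · rw [key _ (by omega), key _ (by omega)]
      · subst h
        rw [key _ (by omega), key _ (by omega)]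
      · subst h
        rw [e3, hd]
    · rintro ⟨c, hc⟩
      refine ⟨fun h => ?_, fun h => ?_, fun h => ?_⟩ <;> simp only at h ⊢
      · rw [key _ (by omega)]
      · subst h
        rw [key _ (by omega)]
      · subst h
        exact hd

lemma likeSum_interKron {𝒴 : Type*} {m : ℕ}
    (W : ZMod 2 → 𝒴 → ℝ) (A : Matrix (Fin m) (Fin m) (ZMod 2)) (i : ℕ) (hi : i + 1 < m)
    (y : Fin (2 * m) → 𝒴) (u : ℕ → ZMod 2) :
    likeSum W (interKron A) (2 * i + 1) y u (u (2 * i + 1)) (u (2 * i + 2)) =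
      ∑ d : ZMod 2,
        likeSum W A i (fun j => y ⟨2 * j.val, by omega⟩)
            (fun t => u (2 * t) + u (2 * t + 1)) (u (2 * i) + u (2 * i + 1)) (u (2 * i + 2) + d) *
          likeSum W A i (fun j => y ⟨2 * j.val + 1, by omega⟩)
            (fun t => u (2 * t + 1)) (u (2 * i + 1)) d := by
  unfold likeSum
  have hsum : ∀ F G : (Fin m → ZMod 2) → ℝ, (∑ v, F v) * (∑ w, G w) =
      ∑ v : Fin (2 * m) → ZMod 2, F (splitEquiv m v).1 * G (splitEquiv m v).2 := by
    intro F G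
    rw [Fintype.sum_mul_sum, (splitEquiv m).sum_comp (fun p => F p.1 * G p.2),
      Fintype.sum_prod_type]
  simp only [hsum]
  rw [Finset.sum_comm]
  refine Finset.sum_congr rfl fun v _ => ?_
  simp only [ite_zero_mul_ite_zero, prefix_iff i hi u v, prod_pairs, vecMul_even, vecMul_odd,
    Finset.prod_mul_distrib, ite_and]
  split_ifs <;> simp

/-- The lozenge identity for `A ⊗ G₂` with an arbitrary square `A`. The size `n = 2 * m` is a
variable so that it can be instantiated with a power of two. -/
lemma adjChannel_interKron {𝒴 : Type*} [Fintype 𝒴] {m n : ℕ} (hn : n = 2 * m)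
    (W : ZMod 2 → 𝒴 → ℝ) (hW1 : ∀ x, ∑ y, W x y = 1)
    (A : Matrix (Fin m) (Fin m) (ZMod 2)) (i : ℕ) (hi : i + 1 < m)
    (y : Fin n → 𝒴) (u : ℕ → ZMod 2) :
    adjChannel W (Matrix.reindex (finCongr hn.symm) (finCongr hn.symm) (interKron A))
        (2 * i + 1) y u (u (2 * i + 1)) (u (2 * i + 2)) =
      (1 / 4 : ℝ) * ∑ d : ZMod 2,
        adjChannel W A i (fun j => y ⟨2 * j.val, by omega⟩)
            (fun t => u (2 * t) + u (2 * t + 1)) (u (2 * i) + u (2 * i + 1)) (u (2 * i + 2) + d) *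
          adjChannel W A i (fun j => y ⟨2 * j.val + 1, by omega⟩)
            (fun t => u (2 * t + 1)) (u (2 * i + 1)) d := by
  subst hn
  have h : Matrix.reindex (finCongr (rfl : 2 * m = 2 * m)) (finCongr rfl) (interKron A) =
      interKron A := by
    ext; rfl
  rw [h, adjChannel_eq W hW1 _ _ (by omega), likeSum_interKron W A i hi]
  simp only [adjChannel_eq W hW1 A i hi, Finset.mul_sum]
  refine Finset.sum_congr rfl fun d _ => ?_
  have hpow : (1 / 2 : ℝ) ^ (2 * m) = (1 / 2) ^ m * (1 / 2) ^ m := by rw [two_mul, pow_add]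
  rw [hpow]
  ring

/-- Lemma 1, '◇' identity: `V_{2i}^{(n)} = (V_i^{(n/2)})^◇` (paper's 1-based index `i`,
`n = 2^(k+2) ≥ 4`, `1 ≤ i ≤ n/2 − 1`; the channels below use 0-based indices). -/
theorem adjChannel_polar_lozenge {𝒴 : Type*} [Fintype 𝒴]
    (W : ZMod 2 → 𝒴 → ℝ) (hW0 : ∀ x y, 0 ≤ W x y) (hW1 : ∀ x, ∑ y, W x y = 1)
    (k i : ℕ) (hi1 : 1 ≤ i) (hi2 : i ≤ 2 ^ (k + 1) - 1)
    (y : Fin (2 ^ (k + 2)) → 𝒴) (u : ℕ → ZMod 2) :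
    adjChannel W (Gpolar (k + 2)) (2 * i - 1) y u (u (2 * i - 1)) (u (2 * i)) =
      (1 / 4 : ℝ) * ∑ d : ZMod 2,
        adjChannel W (Gpolar (k + 1)) (i - 1)
            (fun j => y ⟨2 * j.val, by
              have := j.isLt
              have h : (2 : ℕ) ^ (k + 2) = 2 * 2 ^ (k + 1) := (by ring); omega⟩)
            (fun t => u (2 * t) + u (2 * t + 1))
            (u (2 * i - 2) + u (2 * i - 1)) (u (2 * i) + d) *
          adjChannel W (Gpolar (k + 1)) (i - 1)
            (fun j => y ⟨2 * j.val + 1, by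
              have := j.isLt
              have h : (2 : ℕ) ^ (k + 2) = 2 * 2 ^ (k + 1) := (by ring); omega⟩)
            (fun t => u (2 * t + 1)) (u (2 * i - 1)) d := by
  obtain ⟨i, rfl⟩ : ∃ l, i = l + 1 := ⟨i - 1, by omega⟩
  exact adjChannel_interKron (pow_succ' 2 (k + 1)) W hW1 (Gpolar (k + 1)) i (by omega) y u
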